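/- In any 8-schedule of the RAI instance I', for each ℓ∈[k], j∈[n], t∈[4], the sorting jobs SJob(ℓ,j,t,⊤) and SJob(ℓ,j,t,⊥) are assigned to their first or last eligible machine, i.e., to BSMach(ℓ,j,t) or FSMach(ℓ,j,t), and each of these two machines receives exactly one of these two jobs. -/

import Mathlib

/-!
The proof is a packing argument inside the block of sorting machines with index `ℓ`; no
information about the jobs outside the block is needed.

The interval of a job `SJob(ℓ,·,·,·)` lies in the block (`sjob_mem_block`). Call a pair
`p ≠ ξ(ℓ)` ordinary. Ordinary sorting jobs have size at least 6, hence they do not fit on a machine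
of `ξ(ℓ)`, which carries a private load of 3, and no machine receives two of them. There are as many
ordinary jobs as ordinary machines in the block, so each ordinary machine receives exactly one
ordinary job (`place_surj`). It then has no room for a job of `ξ(ℓ)`; the two jobs of `ξ(ℓ)` must
therefore go to the two machines of `ξ(ℓ)`, and one to each, since `3 + 4 + 3 > 8`.

For ordinary pairs, the eligible intervals are nested: removing `ξ(ℓ)` from `φ_ℓ` and `φ_{ℓ+1}`
leaves the same sequence (`phi_le_of_succ`). The machines of `p` can only receive jobs of `p` or of
pairs later in this sequence, and an induction from the outermost pair inwards shows that the later
pairs are already placed on their own machines (`place_fst_of_ne_big`).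
-/

open Finset

/-- A 3-SAT* instance: `n` variables, `2m` clauses of 3 literals each
(the first `m` are 1-in-3-clauses, the last `m` are 2-in-3-clauses).
`lit i s` is the literal at position `s` of clause `i`, given as a pair
(variable, polarity). The occurrence bijection `occ` maps the pair `(j,t)`
(the `t`-th occurrence of variable `x_j`, positive for `t = 0,1`, negative for
`t = 2,3`) to the corresponding (clause, position) pair; `occ_spec` says the
literal there is indeed `x_j` with the right polarity. Bijectivity of `occ`
encodes that every literal occurs exactly twice (and forces `6m = 4n`). -/
structure SAT3Star where
  n : ℕ
  m : ℕ
  lit : Fin (2 * m) → Fin 3 → Fin n × Bool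
  occ : (Fin n × Fin 4) ≃ (Fin (2 * m) × Fin 3)
  occ_spec : ∀ jt : Fin n × Fin 4,
    lit (occ jt).1 (occ jt).2 = (jt.1, decide ((jt.2 : ℕ) < 2))

/-- `α` satisfies the 3-SAT* instance: every `k`-in-3-clause has exactly `k`
true literals. -/
def SAT3Star.Satisfies (S : SAT3Star) (α : Fin S.n → Bool) : Prop :=
  ∀ i : Fin (2 * S.m),
    (Finset.univ.filter (fun s : Fin 3 => α (S.lit i s).1 = (S.lit i s).2)).card =
      if (i : ℕ) < S.m then 1 else 2

/-- `⌊t/2⌋` as an element of `Fin 2`. -/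
def half (t : Fin 4) : Fin 2 := ⟨(t : ℕ) / 2, by have := t.isLt; omega⟩

/-- Data of the bubble-sort process used in the reduction: `k` is the number of
transpositions, `φ ℓ p` is the position of the pair `p = (j,t)` in the sequence `φ_ℓ`
(each `φ ℓ` is a bijection onto `{0,…,4n-1}`), `φ 0` is the lexicographic order,
`φ k` is the order induced by the lexicographic order of `κ(j,t)`, and consecutive
sequences differ by one adjacent transposition swapping `big ℓ` (which moves right; this
is `ξ(ℓ)`) with `small ℓ`; each swapped pair is an inversion with respect to the
lexicographic order of `κ`. -/
structure BubbleData (S : SAT3Star) where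
  k : ℕ
  φ : Fin (k + 1) → (Fin S.n × Fin 4) → ℕ
  φ_lt : ∀ ℓ p, φ ℓ p < 4 * S.n
  φ_inj : ∀ ℓ, Function.Injective (φ ℓ)
  φ_zero : ∀ p : Fin S.n × Fin 4, φ 0 p = 4 * (p.1 : ℕ) + (p.2 : ℕ)
  φ_last : ∀ p : Fin S.n × Fin 4,
    φ (Fin.last k) p = 3 * ((S.occ p).1 : ℕ) + ((S.occ p).2 : ℕ)
  big : Fin k → Fin S.n × Fin 4
  small : Fin k → Fin S.n × Fin 4
  step_adj : ∀ ℓ, φ ℓ.castSucc (small ℓ) = φ ℓ.castSucc (big ℓ) + 1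
  step_big : ∀ ℓ, φ ℓ.succ (big ℓ) = φ ℓ.castSucc (big ℓ) + 1
  step_small : ∀ ℓ, φ ℓ.succ (small ℓ) = φ ℓ.castSucc (big ℓ)
  step_other : ∀ ℓ p, p ≠ big ℓ → p ≠ small ℓ → φ ℓ.succ p = φ ℓ.castSucc p
  step_inv : ∀ ℓ, ((S.occ (small ℓ)).1 : ℕ) < ((S.occ (big ℓ)).1 : ℕ) ∨
    ((S.occ (small ℓ)).1 = (S.occ (big ℓ)).1 ∧
      ((S.occ (small ℓ)).2 : ℕ) < ((S.occ (big ℓ)).2 : ℕ))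

/-- The machines of the RAI instance I'. -/
inductive IMach (n m k : ℕ) where
  | TMach : Fin n → Fin 2 → IMach n m k
  | BGMach : Fin n → Fin 4 → IMach n m k
  | FGMach : Fin n → Fin 4 → IMach n m k
  | BSMach : Fin k → Fin n → Fin 4 → IMach n m k
  | FSMach : Fin k → Fin n → Fin 4 → IMach n m k
  | CMach : Fin (2 * m) → Fin 3 → IMach n m k
  deriving DecidableEq, Fintype

/-- The jobs of the RAI instance I'; `PJob M` is the private load of machine `M`
(of size 0 on the machines that carry no private load). -/
inductive IJob (n m k : ℕ) where
  | TJob : Fin n → IJob n m k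
  | VJob : Fin n → Fin 4 → Bool → IJob n m k
  | GJob : Fin n → Fin 4 → Bool → IJob n m k
  | BJob : Fin (k + 1) → Fin n → Fin 4 → Bool → IJob n m k
  | SJob : Fin k → Fin n → Fin 4 → Bool → IJob n m k
  | CJob : Fin (2 * m) → Fin 3 → IJob n m k
  | PJob : IMach n m k → IJob n m k
  deriving DecidableEq, Fintype

variable (S : SAT3Star) (B : BubbleData S)

/-- Position of a machine in the left-to-right order of I'. -/
def mpos : IMach S.n S.m B.k → ℕ
  | .TMach j q => 2 * (j : ℕ) + (q : ℕ)
  | .BGMach j t => 2 * S.n + (4 * S.n - 1 - (4 * (j : ℕ) + (t : ℕ)))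
  | .FGMach j t => 6 * S.n + (4 * (j : ℕ) + (t : ℕ))
  | .BSMach ℓ j t =>
      10 * S.n + 8 * S.n * (ℓ : ℕ) + (4 * S.n - 1 - B.φ ℓ.castSucc (j, t))
  | .FSMach ℓ j t => 10 * S.n + 8 * S.n * (ℓ : ℕ) + 4 * S.n + B.φ ℓ.succ (j, t)
  | .CMach i s => 10 * S.n + 8 * S.n * B.k + (6 * S.m - 1 - (3 * (i : ℕ) + (s : ℕ)))

/-- Size of the private load of a machine (0 where there is none). -/
def psize : IMach S.n S.m B.k → ℕ
  | .TMach _ _ => 2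
  | .BGMach _ _ => 1
  | .FGMach _ _ => 2
  | .BSMach ℓ j t => if (j, t) = B.big ℓ then 3 else 0
  | .FSMach ℓ j t => if (j, t) = B.big ℓ then 3 else 0
  | .CMach _ _ => 0

/-- Sizes of the jobs of I'. -/
def jsize : IJob S.n S.m B.k → ℕ
  | .TJob _ => 2
  | .VJob _ _ b => if b then 3 else 2
  | .GJob _ _ b => if b then 4 else 5
  | .BJob _ _ _ b => if b then 2 else 1
  | .SJob ℓ j t b =>
      if (j, t) = B.big ℓ then (if b then 3 else 4) else (if b then 6 else 7)
  | .CJob i s =>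
      if (s : ℕ) = 0 then 6
      else if (s : ℕ) = 1 then 7
      else if (i : ℕ) < S.m then 7 else 6
  | .PJob M => psize S B M

/-- The first (left-most) eligible machine of a job. -/
def firstM : IJob S.n S.m B.k → IMach S.n S.m B.k
  | .TJob j => .TMach j 0
  | .VJob j t _ => .TMach j ⟨(t : ℕ) / 2, by have := t.isLt; omega⟩
  | .GJob j t _ => .BGMach j t
  | .BJob ℓ j t _ =>
      if h : (ℓ : ℕ) = 0 then .FGMach j t
      else .FSMach ⟨(ℓ : ℕ) - 1, by have := ℓ.isLt; omega⟩ j t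
  | .SJob ℓ j t _ => .BSMach ℓ j t
  | .CJob i _ => .CMach i 2
  | .PJob M => M

/-- The last (right-most) eligible machine of a job. -/
def lastM : IJob S.n S.m B.k → IMach S.n S.m B.k
  | .TJob j => .TMach j 1
  | .VJob j t _ => .BGMach j t
  | .GJob j t _ => .FGMach j t
  | .BJob ℓ j t _ =>
      if h : (ℓ : ℕ) < B.k then .BSMach ⟨(ℓ : ℕ), h⟩ j t
      else .CMach (S.occ (j, t)).1 (S.occ (j, t)).2
  | .SJob ℓ j t _ => .FSMach ℓ j t
  | .CJob i _ => .CMach i 0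
  | .PJob M => M

/-- A job is eligible exactly on the machines lying (in the machine order) between its
first and its last eligible machine. -/
def ielig (job : IJob S.n S.m B.k) (M : IMach S.n S.m B.k) : Prop :=
  mpos S B (firstM S B job) ≤ mpos S B M ∧ mpos S B M ≤ mpos S B (lastM S B job)

/-- Load of a machine under a schedule. -/
def iload (σ : IJob S.n S.m B.k → IMach S.n S.m B.k) (M : IMach S.n S.m B.k) : ℕ :=
  ∑ j ∈ Finset.univ.filter (fun j => σ j = M), jsize S B j

/-- An 8-schedule: every job on an eligible machine, every machine with load exactly 8. -/
def EightSchedule (σ : IJob S.n S.m B.k → IMach S.n S.m B.k) : Prop :=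
  (∀ j, ielig S B j (σ j)) ∧ ∀ M, iload S B σ M = 8

/-! ### The block of sorting machines -/

/-- The sorting machines with index `ℓ`: the backward machine of `p` for `c = true`, the forward
machine of `p` for `c = false`. -/
def sMach (ℓ : Fin B.k) (p : Fin S.n × Fin 4) (c : Bool) : IMach S.n S.m B.k :=
  if c then .BSMach ℓ p.1 p.2 else .FSMach ℓ p.1 p.2

/-- The `ℓ`-th window of `8n` positions after the gateways holds only sorting machines with
index `ℓ`. -/
lemma mem_block (ℓ : Fin B.k) (M : IMach S.n S.m B.k)
    (h1 : 10 * S.n + 8 * S.n * (ℓ : ℕ) ≤ mpos S B M)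
    (h2 : mpos S B M < 10 * S.n + 8 * S.n * (ℓ : ℕ) + 8 * S.n) :
    ∃ p c, M = sMach S B ℓ p c := by
  have mul_mono : ∀ a b : ℕ, a < b → 8 * S.n * a + 8 * S.n ≤ 8 * S.n * b := fun a b hab => by
    calc 8 * S.n * a + 8 * S.n = 8 * S.n * (a + 1) := by ring
      _ ≤ 8 * S.n * b := Nat.mul_le_mul_left _ hab
  cases M with
  | TMach j q => simp only [mpos] at h1; omega
  | BGMach j t => simp only [mpos] at h1; omega
  | FGMach j t => simp only [mpos] at h1; omega
  | CMach i s =>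
    simp only [mpos] at h2
    have := mul_mono ℓ B.k ℓ.isLt
    omega
  | BSMach ℓ' j t =>
    simp only [mpos] at h1 h2
    have hlt := B.φ_lt ℓ'.castSucc (j, t)
    rcases lt_trichotomy (ℓ' : ℕ) ℓ with hl | hl | hl
    · have := mul_mono _ _ hl; omega
    · obtain rfl := Fin.ext hl
      exact ⟨(j, t), true, rfl⟩
    · have := mul_mono _ _ hl; omega
  | FSMach ℓ' j t =>
    simp only [mpos] at h1 h2
    have hlt := B.φ_lt ℓ'.succ (j, t)
    rcases lt_trichotomy (ℓ' : ℕ) ℓ with hl | hl | hl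
    · have := mul_mono _ _ hl; omega
    · obtain rfl := Fin.ext hl
      exact ⟨(j, t), false, rfl⟩
    · have := mul_mono _ _ hl; omega

lemma mpos_sMach_true (ℓ : Fin B.k) (p : Fin S.n × Fin 4) :
    mpos S B (sMach S B ℓ p true) =
      10 * S.n + 8 * S.n * (ℓ : ℕ) + (4 * S.n - 1 - B.φ ℓ.castSucc p) := rfl

lemma mpos_sMach_false (ℓ : Fin B.k) (p : Fin S.n × Fin 4) :
    mpos S B (sMach S B ℓ p false) =
      10 * S.n + 8 * S.n * (ℓ : ℕ) + 4 * S.n + B.φ ℓ.succ p := rfl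

lemma mpos_block (ℓ : Fin B.k) (p : Fin S.n × Fin 4) (c : Bool) :
    10 * S.n + 8 * S.n * (ℓ : ℕ) ≤ mpos S B (sMach S B ℓ p c) ∧
      mpos S B (sMach S B ℓ p c) < 10 * S.n + 8 * S.n * (ℓ : ℕ) + 8 * S.n := by
  have h1 := B.φ_lt ℓ.castSucc p
  have h2 := B.φ_lt ℓ.succ p
  cases c
  · rw [mpos_sMach_false]; omega
  · rw [mpos_sMach_true]; omega

lemma mpos_sMach_inj (ℓ : Fin B.k) (p q : Fin S.n × Fin 4) (c d : Bool)
    (h : mpos S B (sMach S B ℓ p c) = mpos S B (sMach S B ℓ q d)) : p = q ∧ c = d := by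
  have h1 := B.φ_lt ℓ.castSucc p
  have h2 := B.φ_lt ℓ.castSucc q
  cases c <;> cases d <;> simp only [mpos_sMach_false, mpos_sMach_true] at h
  · exact ⟨B.φ_inj ℓ.succ (by omega), rfl⟩
  · omega
  · omega
  · exact ⟨B.φ_inj ℓ.castSucc (by omega), rfl⟩

/-- The ordinary pairs occur in the same order in `φ_ℓ` and in `φ_{ℓ+1}`. -/
lemma phi_le_of_succ (ℓ : Fin B.k) (p q : Fin S.n × Fin 4) (hp : p ≠ B.big ℓ) (hq : q ≠ B.big ℓ)
    (h : B.φ ℓ.succ p ≤ B.φ ℓ.succ q) : B.φ ℓ.castSucc p ≤ B.φ ℓ.castSucc q := by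
  have ha := B.step_adj ℓ
  have hs := B.step_small ℓ
  by_cases hps : p = B.small ℓ <;> by_cases hqs : q = B.small ℓ
  · rw [hps, hqs]
  · subst hps
    rw [B.step_other ℓ q hq hqs, hs] at h
    have : B.φ ℓ.castSucc q ≠ B.φ ℓ.castSucc (B.big ℓ) := fun e => hq (B.φ_inj _ e)
    omega
  · subst hqs
    rw [B.step_other ℓ p hp hps, hs] at h
    omega
  · rwa [B.step_other ℓ p hp hps, B.step_other ℓ q hq hqs] at h

/-! ### Loads on sorting machines -/

section Placement

variable {S B}

/-- A sorting job goes to a sorting machine of the same index, of a pair that is not later in the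
sequence ordering these machines (`φ_ℓ` for backward, `φ_{ℓ+1}` for forward machines). -/
lemma sjob_mem_block {σ : IJob S.n S.m B.k → IMach S.n S.m B.k} (h : EightSchedule S B σ)
    (ℓ : Fin B.k) (x : (Fin S.n × Fin 4) × Bool) :
    ∃ y : (Fin S.n × Fin 4) × Bool, σ (.SJob ℓ x.1.1 x.1.2 x.2) = sMach S B ℓ y.1 y.2 ∧
      (y.2 = true → B.φ ℓ.castSucc y.1 ≤ B.φ ℓ.castSucc x.1) ∧
      (y.2 = false → B.φ ℓ.succ y.1 ≤ B.φ ℓ.succ x.1) := by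
  obtain ⟨h1, h2⟩ := h.1 (.SJob ℓ x.1.1 x.1.2 x.2)
  change mpos S B (sMach S B ℓ x.1 true) ≤ _ at h1
  change _ ≤ mpos S B (sMach S B ℓ x.1 false) at h2
  obtain ⟨q, c, hM⟩ := mem_block S B ℓ _ ((mpos_block S B ℓ x.1 true).1.trans h1)
    (h2.trans_lt (mpos_block S B ℓ x.1 false).2)
  refine ⟨(q, c), hM, ?_, ?_⟩
  · rintro rfl
    rw [hM, mpos_sMach_true, mpos_sMach_true] at h1
    have := B.φ_lt ℓ.castSucc q
    have := B.φ_lt ℓ.castSucc x.1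
    dsimp only
    omega
  · rintro rfl
    rw [hM, mpos_sMach_false, mpos_sMach_false] at h2
    dsimp only
    omega

lemma pjob_sMach {σ : IJob S.n S.m B.k → IMach S.n S.m B.k} (h : EightSchedule S B σ)
    (ℓ : Fin B.k) (p : Fin S.n × Fin 4) (c : Bool) :
    σ (.PJob (sMach S B ℓ p c)) = sMach S B ℓ p c := by
  have he : mpos S B (σ (.PJob (sMach S B ℓ p c))) = mpos S B (sMach S B ℓ p c) :=
    le_antisymm (h.1 (.PJob (sMach S B ℓ p c))).2 (h.1 (.PJob (sMach S B ℓ p c))).1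
  obtain ⟨q, d, hM⟩ := mem_block S B ℓ (σ (.PJob (sMach S B ℓ p c)))
    (he ▸ (mpos_block S B ℓ p c).1) (he ▸ (mpos_block S B ℓ p c).2)
  rw [hM] at he
  obtain ⟨rfl, rfl⟩ := mpos_sMach_inj S B ℓ _ _ _ _ he
  exact hM

lemma sum_le_eight {σ : IJob S.n S.m B.k → IMach S.n S.m B.k} (h : EightSchedule S B σ)
    (M : IMach S.n S.m B.k) (T : Finset (IJob S.n S.m B.k)) (hT : ∀ a ∈ T, σ a = M) :
    ∑ a ∈ T, jsize S B a ≤ 8 := by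
  rw [← h.2 M]
  exact Finset.sum_le_sum_of_subset fun a ha => by simp [hT a ha]

/-- Size of the sorting job of the pair `x.1` with truth value `x.2`. -/
def sSize (ℓ : Fin B.k) (x : (Fin S.n × Fin 4) × Bool) : ℕ :=
  if x.1 = B.big ℓ then (if x.2 then 3 else 4) else (if x.2 then 6 else 7)

lemma sSize_add_le {σ : IJob S.n S.m B.k → IMach S.n S.m B.k} (h : EightSchedule S B σ)
    (ℓ : Fin B.k) (x y z : (Fin S.n × Fin 4) × Bool) (hxy : x ≠ y)
    (hx : σ (.SJob ℓ x.1.1 x.1.2 x.2) = sMach S B ℓ z.1 z.2)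
    (hy : σ (.SJob ℓ y.1.1 y.1.2 y.2) = sMach S B ℓ z.1 z.2) :
    sSize ℓ x + sSize ℓ y + (if z.1 = B.big ℓ then 3 else 0) ≤ 8 := by
  have key := sum_le_eight h (sMach S B ℓ z.1 z.2)
    {.SJob ℓ x.1.1 x.1.2 x.2, .SJob ℓ y.1.1 y.1.2 y.2, .PJob (sMach S B ℓ z.1 z.2)} (by
      intro a ha
      simp only [mem_insert, mem_singleton] at ha
      rcases ha with rfl | rfl | rfl
      exacts [hx, hy, pjob_sMach h ℓ _ _])
  rw [Finset.sum_insert, Finset.sum_insert, Finset.sum_singleton] at key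
  · have hp : jsize S B (.PJob (sMach S B ℓ z.1 z.2)) = if z.1 = B.big ℓ then 3 else 0 := by
      obtain ⟨p, c⟩ := z
      cases c <;> rfl
    rw [hp] at key
    change sSize ℓ x + (sSize ℓ y + _) ≤ 8 at key
    omega
  · simp
  · obtain ⟨⟨a, b⟩, c⟩ := x
    obtain ⟨⟨a', b'⟩, c'⟩ := y
    simp only [mem_insert, mem_singleton, IJob.SJob.injEq, reduceCtorEq, or_false, true_and]
    rintro ⟨rfl, rfl, rfl⟩
    exact hxy rfl

lemma sSize_le {σ : IJob S.n S.m B.k → IMach S.n S.m B.k} (h : EightSchedule S B σ)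
    (ℓ : Fin B.k) (x z : (Fin S.n × Fin 4) × Bool)
    (hx : σ (.SJob ℓ x.1.1 x.1.2 x.2) = sMach S B ℓ z.1 z.2) :
    sSize ℓ x + (if z.1 = B.big ℓ then 3 else 0) ≤ 8 := by
  have key := sum_le_eight h (sMach S B ℓ z.1 z.2)
    {.SJob ℓ x.1.1 x.1.2 x.2, .PJob (sMach S B ℓ z.1 z.2)} (by
      intro a ha
      simp only [mem_insert, mem_singleton] at ha
      rcases ha with rfl | rfl
      exacts [hx, pjob_sMach h ℓ _ _])
  rw [Finset.sum_insert (by simp), Finset.sum_singleton] at key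
  have hp : jsize S B (.PJob (sMach S B ℓ z.1 z.2)) = if z.1 = B.big ℓ then 3 else 0 := by
    obtain ⟨p, c⟩ := z
    cases c <;> rfl
  rwa [hp] at key

lemma six_le_sSize (ℓ : Fin B.k) (x : (Fin S.n × Fin 4) × Bool) (hx : x.1 ≠ B.big ℓ) :
    6 ≤ sSize ℓ x := by
  unfold sSize
  rw [if_neg hx]
  split_ifs <;> omega

lemma three_le_sSize (ℓ : Fin B.k) (x : (Fin S.n × Fin 4) × Bool) : 3 ≤ sSize ℓ x := by
  unfold sSize
  split_ifs <;> omega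

/-! ### Placement of the sorting jobs -/

/-- `f` records where `σ` puts the sorting jobs with index `ℓ`: the job of `x.1` with truth value
`x.2` goes to the machine `sMach ℓ (f x).1 (f x).2`. The last two fields come from the eligible
interval. -/
structure IsPlacement (σ : IJob S.n S.m B.k → IMach S.n S.m B.k) (ℓ : Fin B.k)
    (f : (Fin S.n × Fin 4) × Bool → (Fin S.n × Fin 4) × Bool) : Prop where
  eq : ∀ x, σ (.SJob ℓ x.1.1 x.1.2 x.2) = sMach S B ℓ (f x).1 (f x).2
  le_back : ∀ x, (f x).2 = true → B.φ ℓ.castSucc (f x).1 ≤ B.φ ℓ.castSucc x.1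
  le_forw : ∀ x, (f x).2 = false → B.φ ℓ.succ (f x).1 ≤ B.φ ℓ.succ x.1

variable {σ : IJob S.n S.m B.k → IMach S.n S.m B.k} {ℓ : Fin B.k}
  {f : (Fin S.n × Fin 4) × Bool → (Fin S.n × Fin 4) × Bool}

lemma place_ne_big (h : EightSchedule S B σ) (hf : IsPlacement σ ℓ f)
    (x : (Fin S.n × Fin 4) × Bool) (hx : x.1 ≠ B.big ℓ) : (f x).1 ≠ B.big ℓ := by
  intro hb
  have h1 := sSize_le h ℓ x (f x) (hf.eq x)
  have h2 := six_le_sSize ℓ x hx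
  rw [if_pos hb] at h1
  omega

/-- An ordinary job shares its machine with no other sorting job. -/
lemma place_inj (h : EightSchedule S B σ) (hf : IsPlacement σ ℓ f)
    (x y : (Fin S.n × Fin 4) × Bool) (hx : x.1 ≠ B.big ℓ) (hxy : f x = f y) : x = y := by
  by_contra hne
  have h1 := sSize_add_le h ℓ x y (f x) hne (hf.eq x) (hxy ▸ hf.eq y)
  have h2 := six_le_sSize ℓ x hx
  have h3 := three_le_sSize ℓ y
  omega

/-- Every ordinary machine of the block receives an ordinary job, because `f` is an injection of
the finite set of ordinary indices into itself. -/
lemma place_surj (h : EightSchedule S B σ) (hf : IsPlacement σ ℓ f)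
    (z : (Fin S.n × Fin 4) × Bool) (hz : z.1 ≠ B.big ℓ) :
    ∃ x : (Fin S.n × Fin 4) × Bool, x.1 ≠ B.big ℓ ∧ f x = z := by
  let D : Finset ((Fin S.n × Fin 4) × Bool) := univ.filter fun x => x.1 ≠ B.big ℓ
  have hD : ∀ x, x ∈ (D : Set ((Fin S.n × Fin 4) × Bool)) ↔ x.1 ≠ B.big ℓ := fun x => by
    simp [D]
  have hmaps : Set.MapsTo f D D := fun x hx =>
    (hD _).2 (place_ne_big h hf x ((hD x).1 hx))
  have hinj : Set.InjOn f D := fun x hx y _ hxy => place_inj h hf x y ((hD x).1 hx) hxy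
  obtain ⟨x, hx, rfl⟩ := Finset.surjOn_of_injOn_of_card_le f hmaps hinj le_rfl ((hD z).2 hz)
  exact ⟨x, (hD x).1 hx, rfl⟩

/-- The jobs of `ξ(ℓ)` find room only on the machines of `ξ(ℓ)`. -/
lemma place_fst_of_eq_big (h : EightSchedule S B σ) (hf : IsPlacement σ ℓ f)
    (x : (Fin S.n × Fin 4) × Bool) (hx : x.1 = B.big ℓ) : (f x).1 = B.big ℓ := by
  by_contra hb
  obtain ⟨y, hy, hyx⟩ := place_surj h hf (f x) hb
  exact hy (place_inj h hf y x hy hyx ▸ hx)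

/-- The jobs of an ordinary pair go to the machines of this pair. The induction runs from the
outermost interval, which is the last ordinary position of `φ_ℓ`, inwards. -/
lemma place_fst_of_ne_big (h : EightSchedule S B σ) (hf : IsPlacement σ ℓ f) :
    ∀ (d : ℕ) (p : Fin S.n × Fin 4), p ≠ B.big ℓ → 4 * S.n - B.φ ℓ.castSucc p = d →
      ∀ b, (f (p, b)).1 = p := by
  intro d
  induction d using Nat.strong_induction_on with
  | _ d ih =>
    intro p hp hd b
    -- Each of the two machines of `p` receives a job of `p`.
    have own : ∀ c, ∃ b', f (p, b') = (p, c) := by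
      intro c
      obtain ⟨⟨q, b'⟩, hq, hfx⟩ := place_surj h hf (p, c) hp
      have hle : B.φ ℓ.castSucc p ≤ B.φ ℓ.castSucc q := by
        cases c
        · have := hf.le_forw (q, b') (by rw [hfx])
          rw [hfx] at this
          exact phi_le_of_succ S B ℓ p q hp hq this
        · have := hf.le_back (q, b') (by rw [hfx])
          rwa [hfx] at this
      by_cases hqp : q = p
      · exact ⟨b', hqp ▸ hfx⟩
      · have hne : B.φ ℓ.castSucc p ≠ B.φ ℓ.castSucc q := fun e => hqp (B.φ_inj _ e).symm
        have hlt := B.φ_lt ℓ.castSucc q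
        have := ih (4 * S.n - B.φ ℓ.castSucc q) (by omega) q hq rfl b'
        rw [hfx] at this
        exact absurd this.symm hqp
    obtain ⟨b₁, h₁⟩ := own true
    obtain ⟨b₂, h₂⟩ := own false
    have hne : b₁ ≠ b₂ := by
      rintro rfl
      simp [h₁] at h₂
    -- The jobs received by these two machines are distinct, so they are the two jobs of `p`.
    have hb : b = b₁ ∨ b = b₂ := by
      revert hne
      cases b <;> cases b₁ <;> cases b₂ <;> simp
    rcases hb with rfl | rfl
    · rw [h₁]
    · rw [h₂]

lemma place_fst (h : EightSchedule S B σ) (hf : IsPlacement σ ℓ f)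
    (p : Fin S.n × Fin 4) (b : Bool) : (f (p, b)).1 = p := by
  by_cases hp : p = B.big ℓ
  · rw [place_fst_of_eq_big h hf (p, b) hp, hp]
  · exact place_fst_of_ne_big h hf _ p hp rfl b

/-- The two jobs of a pair go to different machines; for `ξ(ℓ)` because `3 + 4 + 3 > 8`. -/
lemma place_true_ne_false (h : EightSchedule S B σ) (hf : IsPlacement σ ℓ f)
    (p : Fin S.n × Fin 4) : f (p, true) ≠ f (p, false) := by
  intro he
  by_cases hp : p = B.big ℓ
  · have h1 := sSize_add_le h ℓ (p, true) (p, false) (f (p, true)) (by simp) (hf.eq _)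
      (he ▸ hf.eq _)
    rw [if_pos ((place_fst h hf p true).trans hp)] at h1
    simp [sSize, hp] at h1
  · simpa using place_inj h hf _ _ hp he

end Placement

/-- in any 8-schedule, the two sorting jobs `SJob(ℓ,j,t,⊤)` and
`SJob(ℓ,j,t,⊥)` go to `BSMach(ℓ,j,t)` or `FSMach(ℓ,j,t)`, one to each. -/
theorem statement14 (σ : IJob S.n S.m B.k → IMach S.n S.m B.k)
    (h : EightSchedule S B σ) (ℓ : Fin B.k) (j : Fin S.n) (t : Fin 4) :
    (σ (.SJob ℓ j t true) = .BSMach ℓ j t ∧ σ (.SJob ℓ j t false) = .FSMach ℓ j t) ∨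
    (σ (.SJob ℓ j t false) = .BSMach ℓ j t ∧ σ (.SJob ℓ j t true) = .FSMach ℓ j t) := by
  choose f hf using sjob_mem_block h ℓ
  have hpl : IsPlacement σ ℓ f := ⟨fun x => (hf x).1, fun x => (hf x).2.1, fun x => (hf x).2.2⟩
  have h1 := hpl.eq ((j, t), true)
  have h2 := hpl.eq ((j, t), false)
  have hne := place_true_ne_false h hpl (j, t)
  have e1 := place_fst h hpl (j, t) true
  have e2 := place_fst h hpl (j, t) false
  rw [e1] at h1
  rw [e2] at h2
  have hc : (f ((j, t), true)).2 ≠ (f ((j, t), false)).2 := fun e =>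
    hne (Prod.ext (e1.trans e2.symm) e)
  generalize (f ((j, t), true)).2 = c at *
  generalize (f ((j, t), false)).2 = d at *
  cases c <;> cases d
  · exact absurd rfl hc
  · exact Or.inr ⟨h2, h1⟩
  · exact Or.inl ⟨h1, h2⟩
  · exact absurd rfl hc
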